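/- Let k be a field and let Q be the quiver of type A_n with vertices 1, …, n and arrows ρ_i from i to i+1 for 1 ≤ i ≤ n−1. For each pair 1 ≤ j ≤ l ≤ n, let V[j,l] be the representation with V_i = k for j ≤ i ≤ l and V_i = 0 otherwise, with V_{ρ_i} = id for j ≤ i ≤ l−1 and V_{ρ_i} = 0 otherwise. Then each V[j,l] is indecomposable, any two distinct V[j,l] are non-isomorphic, and every indecomposable representation of Q is isomorphic to exactly one V[j,l]; the dimension vector of V[j,l] corresponds to the positive root α_j + α_{j+1} + … + α_l of the root system of type A_n. -/

import Mathlib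

/-! Statement 13: for the linearly oriented quiver of type A_n, the interval
representations V[j,l] (1 ≤ j ≤ l ≤ n) are exactly the indecomposable representations up
to isomorphism, pairwise non-isomorphic, and the dimension vector of V[j,l] is the
positive root α_j + ⋯ + α_l (written in the basis of simple roots). -/

/-- A finite-dimensional representation of the quiver `(I, E, s, t)` over the field `k`:
a finite-dimensional `k`-vector space `V i` for each vertex `i` and a `k`-linear map
`f e : V (s e) → V (t e)` for each arrow `e`. -/
structure QRep (k : Type) [Field k] (I E : Type) (s t : E → I) where
  V : I → Type
  [acg : ∀ i, AddCommGroup (V i)]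
  [mod : ∀ i, Module k (V i)]
  [fd : ∀ i, FiniteDimensional k (V i)]
  f : ∀ e : E, V (s e) →ₗ[k] V (t e)

attribute [instance] QRep.acg QRep.mod QRep.fd

namespace QRep

variable {k : Type} [Field k] {I E : Type} {s t : E → I}

/-- Isomorphism of quiver representations: a collection of linear equivalences commuting
with the structure maps. -/
def Iso (M N : QRep k I E s t) : Prop :=
  ∃ φ : ∀ i, M.V i ≃ₗ[k] N.V i,
    ∀ (e : E) (v : M.V (s e)), φ (t e) (M.f e v) = N.f e (φ (s e) v)

/-- Direct sum of two quiver representations, defined vertexwise and arrowwise. -/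
def dsum (M N : QRep k I E s t) : QRep k I E s t where
  V i := M.V i × N.V i
  f e := (M.f e).prodMap (N.f e)

/-- The trivial (zero) representation. -/
def zero (k : Type) [Field k] (I E : Type) (s t : E → I) : QRep k I E s t where
  V _ := PUnit
  f _ := 0

/-- A representation is trivial if all its vector spaces are zero. -/
def IsTrivial (M : QRep k I E s t) : Prop := ∀ i, Subsingleton (M.V i)

/-- A representation is indecomposable if it is nontrivial and not isomorphic to a direct
sum of two nontrivial representations. -/
def Indecomposable (M : QRep k I E s t) : Prop :=
  ¬ M.IsTrivial ∧
    ∀ A B : QRep k I E s t, ¬ A.IsTrivial → ¬ B.IsTrivial → ¬ M.Iso (A.dsum B)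

/-- Finite direct sums of quiver representations. -/
def dsumFin : (n : ℕ) → (Fin n → QRep k I E s t) → QRep k I E s t
  | 0, _ => zero k I E s t
  | n + 1, F => (F 0).dsum (dsumFin n fun a => F a.succ)

/-- The dimension vector of a representation. -/
noncomputable def dimVec (M : QRep k I E s t) : I → ℕ := fun i => Module.finrank k (M.V i)

end QRep

/-- The tail map of the linearly oriented `A_n` quiver: the `e`-th arrow goes `e → e + 1`. -/
def srcA (n : ℕ) (e : Fin (n - 1)) : Fin n := ⟨e.1, by have := e.2; omega⟩

/-- The head map of the linearly oriented `A_n` quiver. -/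
def tgtA (n : ℕ) (e : Fin (n - 1)) : Fin n := ⟨e.1 + 1, by have := e.2; omega⟩

/-- The interval representation `V[j,l]` of the linearly oriented `A_n` quiver: `k` at the
vertices `i` with `j ≤ i ≤ l` (zero elsewhere), with identity maps along the arrows inside
the interval (and zero maps elsewhere). -/
def intervalRep (k : Type) [Field k] (n : ℕ) (j l : Fin n) :
    QRep k (Fin n) (Fin (n - 1)) (srcA n) (tgtA n) where
  V i := Fin (if j ≤ i ∧ i ≤ l then 1 else 0) → k
  f _ := (Matrix.of fun _ _ => (1 : k)).mulVecLin

namespace QRep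

theorem Iso.dimVec_eq {k : Type} [Field k] {I E : Type} {s t : E → I} {M N : QRep k I E s t}
    (h : M.Iso N) (i : I) : M.dimVec i = N.dimVec i := by
  obtain ⟨φ, -⟩ := h
  exact (φ i).finrank_eq

theorem Iso.swap {k : Type} [Field k] {I E : Type} {s t : E → I} {M A B : QRep k I E s t}
    (h : M.Iso (A.dsum B)) : M.Iso (B.dsum A) := by
  obtain ⟨φ, hφ⟩ := h
  refine ⟨fun i => (φ i).trans (LinearEquiv.prodComm k (A.V i) (B.V i)), fun e v => ?_⟩
  have h1 : φ (t e) (M.f e v) = (A.f e (φ (s e) v).1, B.f e (φ (s e) v).2) := hφ e v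
  change (LinearEquiv.prodComm k (A.V (t e)) (B.V (t e))) (φ (t e) (M.f e v)) = _
  rw [h1]
  rfl

/-- A family of submodules stable under the structure maps. -/
def sub {k : Type} [Field k] {I E : Type} {s t : E → I} (M : QRep k I E s t)
    (P : ∀ i, Submodule k (M.V i)) (hP : ∀ e, ∀ x ∈ P (s e), M.f e x ∈ P (t e)) :
    QRep k I E s t where
  V i := P i
  f e := (M.f e).restrict (hP e)

theorem Indecomposable.of_compl {k : Type} [Field k] {I E : Type} {s t : E → I}
    {M : QRep k I E s t} (hM : M.Indecomposable)
    (P R : ∀ i, Submodule k (M.V i)) (hP : ∀ e, ∀ x ∈ P (s e), M.f e x ∈ P (t e))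
    (hR : ∀ e, ∀ x ∈ R (s e), M.f e x ∈ R (t e)) (hc : ∀ i, IsCompl (P i) (R i))
    (hne : ∃ i, P i ≠ ⊥) : ∀ i, R i = ⊥ := by
  by_contra hcon
  refine hM.2 (M.sub P hP) (M.sub R hR) ?_ ?_ ?_
  · intro h
    obtain ⟨i, hi⟩ := hne
    have : Subsingleton (P i) := h i
    exact hi ((Submodule.subsingleton_iff_eq_bot).1 this)
  · intro h
    apply hcon
    intro i
    have : Subsingleton (R i) := h i
    exact (Submodule.subsingleton_iff_eq_bot).1 this
  · refine ⟨fun i => (Submodule.prodEquivOfIsCompl _ _ (hc i)).symm, fun e v => ?_⟩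
    refine (LinearEquiv.symm_apply_eq (Submodule.prodEquivOfIsCompl _ _ (hc (t e)))).2 ?_
    obtain ⟨⟨x, y⟩, rfl⟩ := (Submodule.prodEquivOfIsCompl _ _ (hc (s e))).surjective v
    change _ = Submodule.prodEquivOfIsCompl _ _ (hc (t e)) (((M.sub P hP).dsum (M.sub R hR)).f e
      ((Submodule.prodEquivOfIsCompl _ _ (hc (s e))).symm
        (Submodule.prodEquivOfIsCompl _ _ (hc (s e)) (x, y))))
    have h1 := LinearEquiv.symm_apply_apply (Submodule.prodEquivOfIsCompl _ _ (hc (s e))) (x, y)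
    refine Eq.trans ?_ (congrArg (fun z => Submodule.prodEquivOfIsCompl _ _ (hc (t e))
      (((M.sub P hP).dsum (M.sub R hR)).f e z)) h1.symm)
    simp only [Submodule.coe_prodEquivOfIsCompl', map_add]
    rfl

end QRep

theorem interval_dimVec (k : Type) [Field k] (n : ℕ) (j l i : Fin n) :
    (intervalRep k n j l).dimVec i = if j ≤ i ∧ i ≤ l then 1 else 0 := by
  change Module.finrank k (Fin (if j ≤ i ∧ i ≤ l then 1 else 0) → k) = _
  simp

theorem interval_ext {n : ℕ} {j l j' l' : Fin n} (h : j ≤ l) (h' : j' ≤ l')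
    (H : ∀ i : Fin n, (if j ≤ i ∧ i ≤ l then 1 else 0 : ℕ) = if j' ≤ i ∧ i ≤ l' then 1 else 0) :
    j = j' ∧ l = l' := by
  have h1 := H j
  have h2 := H j'
  have h3 := H l
  have h4 := H l'
  have h1 : j' ≤ j := by by_contra hh; simp [h, hh] at h1
  have h2 : j ≤ j' := by by_contra hh; simp [h', hh] at h2
  have h3 : l ≤ l' := by by_contra hh; simp [h, hh] at h3
  have h4 : l' ≤ l := by by_contra hh; simp [h', hh] at h4
  exact ⟨le_antisymm h2 h1, le_antisymm h3 h4⟩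

theorem interval_inj (k : Type) [Field k] (n : ℕ) (j l : Fin n) (e : Fin (n - 1))
    (h2 : j ≤ tgtA n e ∧ tgtA n e ≤ l)
    (y : (intervalRep k n j l).V (srcA n e)) (hy : (intervalRep k n j l).f e y = 0) : y = 0 := by
  have key : ∀ (a b : ℕ) (ha : a ≤ 1) (hb : b = 1) (y : Fin a → k),
      (Matrix.of fun (_ : Fin b) (_ : Fin a) => (1 : k)).mulVecLin y = 0 → y = 0 := by
    intro a b ha hb y hy
    subst hb
    have h0 := congrFun hy 0
    interval_cases a
    · exact Subsingleton.elim _ _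
    · funext i
      have hi : i = 0 := Subsingleton.elim _ _
      subst hi
      simpa [Matrix.mulVec, dotProduct] using h0
  exact key _ _ (by split_ifs <;> simp) (if_pos h2) y hy

theorem interval_prop (k : Type) [Field k] (m : ℕ) (j l : Fin (m + 1))
    (A B : QRep k (Fin (m + 1)) (Fin (m + 1 - 1)) (srcA (m + 1)) (tgtA (m + 1)))
    (h : (intervalRep k (m + 1) j l).Iso (A.dsum B)) (a : Fin (m + 1)) (ha : j ≤ a)
    (hA : Nontrivial (A.V a)) (b : Fin (m + 1)) : a ≤ b → b ≤ l → Nontrivial (A.V b) := by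
  obtain ⟨φ, hφ⟩ := h
  induction b using Fin.induction with
  | zero =>
    intro h _
    have : a = 0 := le_antisymm h (Fin.zero_le _)
    subst this
    exact hA
  | succ e ih =>
    intro h1 h2
    rcases eq_or_lt_of_le h1 with h3 | h3
    · subst h3; exact hA
    have h4 : a ≤ e.castSucc := Fin.le_castSucc_iff.2 h3
    have hnt := ih h4 (le_trans (Fin.castSucc_lt_succ).le h2)
    obtain ⟨x, hx⟩ := exists_ne (0 : A.V e.castSucc)
    obtain ⟨y, hy⟩ := (φ (srcA (m + 1) e)).surjective (x, 0)
    have h5 : φ (tgtA (m + 1) e) ((intervalRep k (m + 1) j l).f e y)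
        = (A.dsum B).f e (φ (srcA (m + 1) e) y) := hφ e y
    rw [hy] at h5
    refine ⟨A.f e x, 0, fun h0 => hx ?_⟩
    have h6 : (A.dsum B).f e ((x, 0) : A.V _ × B.V _) = 0 := by
      change ((A.f e x, B.f e 0) : A.V _ × B.V _) = 0
      rw [map_zero, h0]; rfl
    replace h5 := (LinearEquiv.map_eq_zero_iff _).1 (h5.trans h6)
    have h7 := interval_inj k (m + 1) j l e ⟨ha.trans h1, h2⟩ y h5
    rw [h7, map_zero] at hy
    exact (congrArg Prod.fst hy).symm

theorem interval_indec (k : Type) [Field k] (m : ℕ) (j l : Fin (m + 1)) (hjl : j ≤ l) :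
    (intervalRep k (m + 1) j l).Indecomposable := by
  have hd : ∀ (M : QRep k (Fin (m + 1)) (Fin (m + 1 - 1)) (srcA (m + 1)) (tgtA (m + 1))) i,
    Nontrivial (M.V i) ↔ 0 < M.dimVec i := fun M i => Module.finrank_pos_iff.symm
  constructor
  · intro h
    have h1 := h j
    rw [← not_nontrivial_iff_subsingleton, hd, interval_dimVec] at h1
    simp [hjl] at h1
  · intro A B hA hB h
    have hs : ∀ i, A.dimVec i + B.dimVec i = if j ≤ i ∧ i ≤ l then 1 else 0 := by
      intro i
      rw [← interval_dimVec k, h.dimVec_eq]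
      exact (Module.finrank_prod (R := k) (M := A.V i) (M' := B.V i)).symm
    simp only [QRep.IsTrivial, not_forall, not_subsingleton_iff_nontrivial] at hA hB
    obtain ⟨a, ha⟩ := hA
    obtain ⟨b, hb⟩ := hB
    have ha' := (hd _ _).1 ha
    have hb' := (hd _ _).1 hb
    have hsa := hs a
    have hsb := hs b
    have pa : j ≤ a ∧ a ≤ l := by by_contra hh; rw [if_neg hh] at hsa; omega
    have pb : j ≤ b ∧ b ≤ l := by by_contra hh; rw [if_neg hh] at hsb; omega
    rw [if_pos pa] at hsa
    rw [if_pos pb] at hsb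
    rcases le_total a b with hab | hab
    · have := (hd _ _).1 (interval_prop k m j l A B h a pa.1 ha b hab pb.2)
      omega
    · have := (hd _ _).1 (interval_prop k m j l B A h.swap b pb.1 hb a hab pa.2)
      omega

theorem exists_interval (k : Type) [Field k] (m : ℕ)
    (M : QRep k (Fin (m + 1)) (Fin m) Fin.castSucc Fin.succ) (hM : M.Indecomposable) :
    ∃ (j l : Fin (m + 1)) (w : ∀ i, M.V i) (π : ∀ i, M.V i →ₗ[k] k), j ≤ l ∧
      (∀ i, i < j → Subsingleton (M.V i)) ∧ (∀ i, Function.Injective (π i)) ∧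
      (∀ i, j ≤ i → i ≤ l → π i (w i) = 1) ∧ (∀ i, l < i → π i = 0) ∧
      (∀ e : Fin m, e.castSucc ≠ l → π e.castSucc = π e.succ ∘ₗ M.f e) := by
  classical
  have h1 := hM.1
  simp only [QRep.IsTrivial, not_forall, not_subsingleton_iff_nontrivial] at h1
  obtain ⟨j, hj, hjmin⟩ := WellFounded.has_min (wellFounded_lt (α := Fin (m + 1)))
    {i | Nontrivial (M.V i)} h1
  have hsub : ∀ i, i < j → Subsingleton (M.V i) := fun i hi =>
    not_nontrivial_iff_subsingleton.1 fun hh => hjmin i hh hi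
  have hnt : Nontrivial (M.V j) := hj
  obtain ⟨v, hv⟩ := exists_ne (0 : M.V j)
  obtain ⟨w, hwj, hws⟩ : ∃ w : ∀ i, M.V i, w j = v ∧
      ∀ e : Fin m, e.succ ≠ j → w e.succ = M.f e (w e.castSucc) := by
    let u : ∀ i, M.V i := Pi.single j v
    let w : ∀ i, M.V i := fun i => Fin.induction (motive := fun i => M.V i) (u 0)
      (fun i x => u i.succ + M.f i x) i
    have hw0 : w 0 = u 0 := rfl
    have hw1 : ∀ e : Fin m, w e.succ = u e.succ + M.f e (w e.castSucc) := fun e => rfl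
    refine ⟨w, ?_, ?_⟩
    · rcases Fin.eq_zero_or_eq_succ j with h | ⟨e, h⟩
      · have : w j = u j := by rw [h]; exact hw0
        rw [this]; simp [u]
      · have : w j = u j := by
          have := hsub e.castSucc (h ▸ Fin.castSucc_lt_succ)
          rw [h, hw1, Subsingleton.elim (w e.castSucc) 0]; simp
        rw [this]; simp [u]
    · intro e he
      rw [hw1]
      simp [u, Pi.single_eq_of_ne he]
  obtain ⟨l, hl, hlmax⟩ := WellFounded.has_min (wellFounded_gt (α := Fin (m + 1)))
    {i | w i ≠ 0} ⟨j, by simpa [hwj] using hv⟩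
  have hw0 : ∀ i, l < i → w i = 0 := fun i hi => by
    by_contra hh; exact hlmax i hh hi
  have hjl : j ≤ l := by
    by_contra hh
    exact hlmax j (by simpa [hwj] using hv) (not_le.1 hh)
  obtain ⟨ξ, hξ⟩ := Module.Projective.exists_dual_ne_zero k (show w l ≠ 0 from hl)
  obtain ⟨π, hπl, hπ0, hπs⟩ : ∃ π : ∀ i, M.V i →ₗ[k] k, π l (w l) = 1 ∧ (∀ i, l < i → π i = 0) ∧
      (∀ e : Fin m, e.castSucc ≠ l → π e.castSucc = π e.succ ∘ₗ M.f e) := by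
    let u : ∀ i, M.V i →ₗ[k] k := Pi.single l ((ξ (w l))⁻¹ • ξ)
    let π : ∀ i, M.V i →ₗ[k] k := fun i => Fin.reverseInduction
      (motive := fun i => M.V i →ₗ[k] k) (u (Fin.last m))
      (fun i p => u i.castSucc + p ∘ₗ M.f i) i
    have hp0 : π (Fin.last m) = u (Fin.last m) := Fin.reverseInduction_last ..
    have hp1 : ∀ e : Fin m, π e.castSucc = u e.castSucc + π e.succ ∘ₗ M.f e :=
      fun e => Fin.reverseInduction_castSucc ..
    have hu : ∀ i, i ≠ l → u i = 0 := fun i hi => Pi.single_eq_of_ne hi _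
    have hz : ∀ i, l < i → π i = 0 := by
      intro i
      induction i using Fin.reverseInduction with
      | last => intro h; rw [hp0, hu _ h.ne']
      | cast e ih =>
        intro h
        rw [hp1, hu _ h.ne', ih (h.trans Fin.castSucc_lt_succ)]
        simp
    refine ⟨π, ?_, hz, ?_⟩
    · have : π l = u l := by
        rcases Fin.eq_castSucc_or_eq_last l with ⟨e, h⟩ | h
        · have h2 := hz e.succ (h ▸ Fin.castSucc_lt_succ)
          rw [h, hp1, h2]; simp
        · rw [h]; exact hp0
      rw [this]
      simp [u, hξ]
    · intro e he
      rw [hp1, hu _ he, zero_add]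
  have hπw : ∀ i, j ≤ i → i ≤ l → π i (w i) = 1 := by
    intro i
    induction i using Fin.reverseInduction with
    | last =>
      intro _ h
      have : l = Fin.last m := le_antisymm (Fin.le_last _) h
      rw [← this]; exact hπl
    | cast e ih =>
      intro h1 h2
      rcases eq_or_lt_of_le h2 with h | h
      · rw [h]; exact hπl
      · have h3 : j < e.succ := lt_of_le_of_lt h1 Fin.castSucc_lt_succ
        rw [hπs e h.ne, LinearMap.comp_apply, ← hws e h3.ne']
        exact ih h3.le (Fin.castSucc_lt_iff_succ_le.1 h)
  have hdich : ∀ i, π i (w i) = 1 ∨ (w i = 0 ∧ π i = 0) := by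
    intro i
    rcases lt_or_ge i j with h | h
    · have := hsub i h
      exact Or.inr ⟨Subsingleton.elim _ _, LinearMap.ext fun x => by
        rw [Subsingleton.elim x 0]; simp⟩
    · rcases lt_or_ge l i with h' | h'
      · exact Or.inr ⟨hw0 i h', hπ0 i h'⟩
      · exact Or.inl (hπw i h h')
  have hker := hM.of_compl (fun i => Submodule.span k {w i}) (fun i => LinearMap.ker (π i))
    (by
      intro e x hx
      obtain ⟨c, rfl⟩ := Submodule.mem_span_singleton.1 hx
      by_cases he : e.succ = j
      · have := hsub e.castSucc (he ▸ Fin.castSucc_lt_succ)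
        rw [Subsingleton.elim (w e.castSucc) 0]; simp
      · rw [map_smul, ← hws e he]
        exact Submodule.smul_mem _ _ (Submodule.mem_span_singleton_self _))
    (by
      intro e x hx
      by_cases he : e.castSucc = l
      · rw [hπ0 e.succ (he ▸ Fin.castSucc_lt_succ)]; simp
      · rw [LinearMap.mem_ker, hπs e he] at hx
        exact hx)
    (by
      intro i
      rcases hdich i with h | ⟨h, h'⟩
      · constructor
        · rw [Submodule.disjoint_def]
          intro x hx hx'
          obtain ⟨c, rfl⟩ := Submodule.mem_span_singleton.1 hx
          have : c = 0 := by simpa [h] using hx'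
          simp [this]
        · rw [codisjoint_iff, eq_top_iff]
          intro x _
          refine Submodule.mem_sup.2 ⟨π i x • w i, Submodule.smul_mem _ _
            (Submodule.mem_span_singleton_self _), x - π i x • w i, ?_, by simp⟩
          simp [h]
      · simp only [h, h', Submodule.span_zero_singleton, LinearMap.ker_zero]
        exact isCompl_bot_top)
    ⟨j, by simpa [hwj] using hv⟩
  exact ⟨j, l, w, π, hjl, hsub, fun i => LinearMap.ker_eq_bot.1 (hker i), hπw, hπ0, hπs⟩

theorem exists_iso (k : Type) [Field k] (m : ℕ)
    (M : QRep k (Fin (m + 1)) (Fin (m + 1 - 1)) (srcA (m + 1)) (tgtA (m + 1)))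
    (hM : M.Indecomposable) :
    ∃ j l : Fin (m + 1), j ≤ l ∧ M.Iso (intervalRep k (m + 1) j l) := by
  obtain ⟨j, l, w, π, hjl, hsub, hinj, hw, h0, hs⟩ := exists_interval k m M hM
  refine ⟨j, l, hjl, ?_⟩
  let g : ∀ i, M.V i →ₗ[k] (Fin (if j ≤ i ∧ i ≤ l then 1 else 0) → k) :=
    fun i => LinearMap.pi fun _ => π i
  have hz : ∀ i, ¬ (j ≤ i ∧ i ≤ l) → ∀ x : M.V i, x = 0 := by
    intro i hi x
    rcases lt_or_ge i j with h | h
    · have := hsub i h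
      exact Subsingleton.elim _ _
    · have h' : l < i := by by_contra hh; exact hi ⟨h, not_lt.1 hh⟩
      apply hinj i
      rw [h0 i h']; simp
  have hg : ∀ i, Function.Bijective (g i) := by
    intro i
    by_cases hi : j ≤ i ∧ i ≤ l
    · have hc : (if j ≤ i ∧ i ≤ l then 1 else 0 : ℕ) = 1 := if_pos hi
      have i0 : Fin (if j ≤ i ∧ i ≤ l then 1 else 0) := ⟨0, by rw [hc]; exact one_pos⟩
      have hss : Subsingleton (Fin (if j ≤ i ∧ i ≤ l then 1 else 0)) := by
        rw [hc]; infer_instance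
      constructor
      · intro x y hxy
        exact hinj i (congrFun hxy i0)
      · intro y
        refine ⟨y i0 • w i, ?_⟩
        funext a
        rw [Subsingleton.elim a i0]
        simp [g, hw i hi.1 hi.2]
    · have hc : (if j ≤ i ∧ i ≤ l then 1 else 0 : ℕ) = 0 := if_neg hi
      have hss : IsEmpty (Fin (if j ≤ i ∧ i ≤ l then 1 else 0)) := by
        rw [hc]; infer_instance
      exact ⟨fun x y _ => by rw [hz i hi x, hz i hi y], fun y => ⟨0, Subsingleton.elim _ _⟩⟩
  refine ⟨fun i => LinearEquiv.ofBijective (g i) (hg i), fun e v => ?_⟩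
  change g (tgtA (m + 1) e) (M.f e v) = (Matrix.of fun _ _ => (1 : k)).mulVecLin
    (g (srcA (m + 1) e) v)
  by_cases h1 : j ≤ srcA (m + 1) e ∧ srcA (m + 1) e ≤ l
  · have hc : (if j ≤ srcA (m + 1) e ∧ srcA (m + 1) e ≤ l then 1 else 0 : ℕ) = 1 := if_pos h1
    funext a
    have h2 : j ≤ tgtA (m + 1) e ∧ tgtA (m + 1) e ≤ l := by
      by_contra hh
      exact absurd (lt_of_lt_of_eq a.2 (if_neg hh)) (Nat.not_lt_zero _)
    have hne : srcA (m + 1) e ≠ l := by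
      intro hh
      have h3 := h2.2
      rw [← hh] at h3
      simp only [srcA, tgtA, Fin.mk_le_mk] at h3
      omega
    have h4 : π (srcA (m + 1) e) = π (tgtA (m + 1) e) ∘ₗ M.f e := hs e hne
    change π (tgtA (m + 1) e) (M.f e v) = _
    simp [Matrix.mulVec, dotProduct, g, hc, h4]
  · rw [hz _ h1 v]
    simp

open QRep in
theorem stmt13 (k : Type) [Field k] (n : ℕ) (hn : 1 ≤ n) :
    -- each V[j,l] is indecomposable
    (∀ j l : Fin n, j ≤ l → (intervalRep k n j l).Indecomposable) ∧
    -- distinct intervals give non-isomorphic representations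
    (∀ j l j' l' : Fin n, j ≤ l → j' ≤ l' →
      (intervalRep k n j l).Iso (intervalRep k n j' l') → j = j' ∧ l = l') ∧
    -- every indecomposable representation is isomorphic to exactly one V[j,l]
    (∀ M : QRep k (Fin n) (Fin (n - 1)) (srcA n) (tgtA n), M.Indecomposable →
      ∃! p : Fin n × Fin n, p.1 ≤ p.2 ∧ M.Iso (intervalRep k n p.1 p.2)) ∧
    -- the dimension vector of V[j,l] is the positive root α_j + ⋯ + α_l
    (∀ j l : Fin n, j ≤ l → ∀ i : Fin n,
      dimVec (intervalRep k n j l) i = if j ≤ i ∧ i ≤ l then 1 else 0) := by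
  obtain ⟨m, rfl⟩ : ∃ m, n = m + 1 := ⟨n - 1, by omega⟩
  refine ⟨fun j l h => interval_indec k m j l h, ?_, ?_, fun j l _ i => interval_dimVec k _ j l i⟩
  · intro j l j' l' h h' hI
    refine interval_ext h h' fun i => ?_
    rw [← interval_dimVec k, ← interval_dimVec k, hI.dimVec_eq]
  · intro M hM
    obtain ⟨j, l, hjl, hI⟩ := exists_iso k m M hM
    refine ⟨(j, l), ⟨hjl, hI⟩, ?_⟩
    rintro ⟨j', l'⟩ ⟨h', hI'⟩
    have := interval_ext h' hjl fun i => by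
      rw [← interval_dimVec k, ← interval_dimVec k, ← hI.dimVec_eq, ← hI'.dimVec_eq]
    exact Prod.ext this.1 this.2
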